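/- Let G be a connected locally finite graph and let 𝒜 be a shift-invariant event of the simple random walk on G. For r ∈ (0,1/2] set A_r := {v ∈ V(G) : P_v(𝒜) > 1 − r}. Then for every ε, δ ∈ (0,1/2] and every v ∈ A_ε, the probability that the simple random walk started at v ever visits a vertex of V(G) ∖ A_δ is strictly less than ε/δ. The analogous statement holds for Z_r := {v ∈ V(G) : P_v(𝒜) < r}: for every v ∈ Z_ε, the probability that the walk ever visits V(G) ∖ Z_δ is strictly less than ε/δ. -/

import Mathlib

/-!
Write `h u = P u A`. If `h ≥ c` on a set `B` of vertices, split the trajectories that hit `B`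
according to the path up to the first visit. By the Markov property (`markov`) and the shift
invariance of `A`, conditionally on each such path the event `A` has probability `h u ≥ c`, where
`u ∈ B` is the endpoint. Summing over the countably many paths gives
`c * P v (B is hit) ≤ h v` (`hitting_bound`).

With `B = V ∖ Z_δ` and `c = δ`, the hitting probability is at most `h v / δ < ε / δ`. The statement
for `A_r` is the one for `Z_r` applied to the complement of `A`.

The laws are given by their cylinder probabilities only; the Markov property follows since
cylinders form a π-system generating the product σ-algebra, which uses that `V` is countable
(`countable_of_connected`).
-/

/-!
STATEMENT 10: Let G be a connected locally finite graph and 𝒜 a shift-invariant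
event of the simple random walk on G.  For r ∈ (0,1/2] set
A_r := {v : P_v(𝒜) > 1 − r} and Z_r := {v : P_v(𝒜) < r}.  Then for all
ε, δ ∈ (0,1/2] and every v ∈ A_ε, the probability that the walk from v ever
visits V ∖ A_δ is < ε/δ; and for every v ∈ Z_ε, the probability that the walk
from v ever visits V ∖ Z_δ is < ε/δ.
-/

namespace Paper

open MeasureTheory Filter
open scoped Classical

variable {V : Type*}

/-- `h` is harmonic: at each vertex, `deg v · h v` equals the sum of `h` over
the neighbours of `v`. -/
def Harmonic (G : SimpleGraph V) (h : V → ℝ) : Prop :=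
  ∀ v, ((G.neighborSet v).ncard : ℝ) * h v = ∑ᶠ w ∈ G.neighborSet v, h w

/-- One-step transition probability of the simple random walk on `G`. -/
noncomputable def stepProb (G : SimpleGraph V) (u w : V) : ENNReal :=
  if G.Adj u w then ((G.neighborSet u).ncard : ENNReal)⁻¹ else 0

/-- `P` is the family of laws of the simple random walk on `G`: `P v` is a
probability measure on the trajectory space `ℕ → V` (with the product
σ-algebra) whose finite-dimensional cylinder probabilities are the products of
the one-step transition probabilities, started at `v`. -/
def IsSRWLaw [MeasurableSpace V] (G : SimpleGraph V)
    (P : V → Measure (ℕ → V)) : Prop :=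
  (∀ v, IsProbabilityMeasure (P v)) ∧
  ∀ (v : V) (n : ℕ) (x : ℕ → V),
    P v {ω | ∀ i ≤ n, ω i = x i} =
      if x 0 = v then ∏ i ∈ Finset.range n, stepProb G (x i) (x (i + 1)) else 0

/-- `h` is a sharp harmonic function: harmonic with values in `[0,1]`, and from
every vertex, almost surely `h (X n)` converges to `0` or to `1`. -/
def Sharp [MeasurableSpace V] (G : SimpleGraph V) (P : V → Measure (ℕ → V))
    (h : V → ℝ) : Prop :=
  Harmonic G h ∧ (∀ v, h v ∈ Set.Icc (0 : ℝ) 1) ∧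
  ∀ v, P v {ω | Tendsto (fun n => h (ω n)) atTop (nhds 0) ∨
               Tendsto (fun n => h (ω n)) atTop (nhds 1)} = 1

/-- A shift-invariant event of the trajectory space. -/
def ShiftInvariant [MeasurableSpace V] (A : Set (ℕ → V)) : Prop :=
  MeasurableSet A ∧ A = (fun ω : ℕ → V => fun n => ω (n + 1)) ⁻¹' A

/-- The trajectories that agree with `x` up to and including time `n`. -/
def cyl (n : ℕ) (x : ℕ → V) : Set (ℕ → V) := {ω | ∀ i ≤ n, ω i = x i}

/-- A finite path `y`, continued periodically to an infinite one. -/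
def extendPath {n : ℕ} (y : Fin (n + 1) → V) : ℕ → V := fun i => y (Fin.ofNat (n + 1) i)

lemma mem_cyl_extendPath {n : ℕ} (y : Fin (n + 1) → V) (ω : ℕ → V) :
    ω ∈ cyl n (extendPath y) ↔ (fun i : Fin (n + 1) => ω i) = y := by
  constructor
  · intro h
    funext i
    rw [h i (by omega)]
    simp [extendPath]
  · rintro rfl i hi
    simp [extendPath, Nat.mod_eq_of_lt (Nat.lt_succ_of_le hi)]

lemma countable_of_connected (G : SimpleGraph V) (hconn : G.Connected)
    (hlf : ∀ v, (G.neighborSet v).Finite) : Countable V := by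
  obtain ⟨v⟩ := hconn.nonempty
  have hfin : ∀ n, {w | ∃ p : G.Walk w v, p.length = n}.Finite := by
    intro n
    induction n with
    | zero =>
      refine (Set.finite_singleton v).subset ?_
      rintro w ⟨p, hp⟩
      exact SimpleGraph.Walk.eq_of_length_eq_zero hp
    | succ n ih =>
      refine (ih.biUnion fun u _ => hlf u).subset ?_
      rintro w ⟨p, hp⟩
      cases p with
      | nil => simp at hp
      | cons h q =>
        simp only [SimpleGraph.Walk.length_cons, Nat.add_right_cancel_iff] at hp
        exact Set.mem_biUnion (show _ ∈ _ from ⟨q, hp⟩) h.symm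
  rw [← Set.countable_univ_iff]
  refine (Set.countable_iUnion fun n => (hfin n).countable).mono ?_
  intro w _
  obtain ⟨p⟩ := hconn.preconnected w v
  exact Set.mem_iUnion.2 ⟨p.length, p, rfl⟩

lemma isPiSystem_cyl : IsPiSystem {s : Set (ℕ → V) | ∃ n x, s = cyl n x} := by
  rintro _ ⟨n, x, rfl⟩ _ ⟨k, y, rfl⟩ ⟨z, hz, hz'⟩
  refine ⟨max n k, z, ?_⟩
  ext ω
  constructor
  · rintro ⟨h, h'⟩ i hi
    rcases le_max_iff.1 hi with hi | hi
    · rw [h i hi, hz i hi]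
    · rw [h' i hi, hz' i hi]
  · intro h
    exact ⟨fun i hi => (h i (le_max_of_le_left hi)).trans (hz i hi),
      fun i hi => (h i (le_max_of_le_right hi)).trans (hz' i hi)⟩

lemma ShiftInvariant.preimage_add [MeasurableSpace V] {A : Set (ℕ → V)} (hA : ShiftInvariant A) (n : ℕ) :
    (fun ω i => ω (n + i)) ⁻¹' A = A := by
  induction n with
  | zero => simp
  | succ n ih =>
    conv_rhs => rw [← ih, hA.2]
    ext ω
    simp only [Set.mem_preimage, add_assoc, add_comm 1]

lemma ShiftInvariant.compl [MeasurableSpace V] {A : Set (ℕ → V)} (hA : ShiftInvariant A) : ShiftInvariant Aᶜ :=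
  ⟨hA.1.compl, by rw [Set.preimage_compl, ← hA.2]⟩

section Markov

variable [MeasurableSpace V] [DiscreteMeasurableSpace V]

lemma measurableSet_cyl (n : ℕ) (x : ℕ → V) : MeasurableSet (cyl n x) := by
  have : cyl n x = ⋂ i, ⋂ _ : i ≤ n, (fun ω : ℕ → V => ω i) ⁻¹' {x i} := by
    ext ω; simp [cyl]
  rw [this]
  exact MeasurableSet.iInter fun i => MeasurableSet.iInter fun _ =>
    measurable_pi_apply i (MeasurableSet.of_discrete)

/-- The cylinders generate the product σ-algebra, because every coordinate event is a countable
union of cylinders. -/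
lemma pi_eq_generateFrom_cyl [Countable V] :
    (MeasurableSpace.pi : MeasurableSpace (ℕ → V)) =
      MeasurableSpace.generateFrom {s | ∃ n x, s = cyl n x} := by
  apply le_antisymm
  · refine iSup_le fun i => ?_
    rintro _ ⟨s, -, rfl⟩
    have : (fun ω : ℕ → V => ω i) ⁻¹' s =
        ⋃ y ∈ {y : Fin (i + 1) → V | y (Fin.last i) ∈ s}, cyl i (extendPath y) := by
      ext ω
      simp only [Set.mem_preimage, Set.mem_iUnion, mem_cyl_extendPath, Set.mem_ofPred_eq,
        exists_prop, exists_eq_right', Fin.val_last]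
    rw [this]
    exact MeasurableSet.biUnion (Set.to_countable _) fun y _ =>
      MeasurableSpace.measurableSet_generateFrom ⟨i, _, rfl⟩
  · refine MeasurableSpace.generateFrom_le ?_
    rintro _ ⟨n, x, rfl⟩
    exact measurableSet_cyl n x

/-- The Markov property at time `n`: given the path up to time `n`, the shifted trajectory is a
simple random walk started at the current vertex. -/
lemma markov [Countable V] (G : SimpleGraph V) (P : V → Measure (ℕ → V)) (hP : IsSRWLaw G P)
    (v : V) (n : ℕ) (x : ℕ → V) (E : Set (ℕ → V)) (hE : MeasurableSet E) :
    P v ((fun ω i => ω (n + i)) ⁻¹' E ∩ cyl n x) = P v (cyl n x) * P (x n) E := by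
  obtain ⟨hprob, hcyl⟩ := hP
  have hcyl' : ∀ v n x, P v (cyl n x) =
      if x 0 = v then ∏ i ∈ Finset.range n, stepProb G (x i) (x (i + 1)) else 0 := hcyl
  have hshift : Measurable (fun (ω : ℕ → V) (i : ℕ) => ω (n + i)) :=
    measurable_pi_lambda _ fun i => measurable_pi_apply _
  have key : ((P v).restrict (cyl n x)).map (fun ω i => ω (n + i)) =
      P v (cyl n x) • P (x n) := by
    refine ext_of_generate_finite _ pi_eq_generateFrom_cyl isPiSystem_cyl ?_ ?_
    · rintro _ ⟨k, y, rfl⟩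
      rw [Measure.map_apply hshift (measurableSet_cyl k y),
        Measure.restrict_apply (hshift (measurableSet_cyl k y)), Measure.smul_apply, smul_eq_mul]
      by_cases hy : y 0 = x n
      · -- The two cylinder conditions glue to a single one for the concatenated path.
        let z : ℕ → V := fun i => if i ≤ n then x i else y (i - n)
        have hz1 : ∀ i ≤ n, z i = x i := fun i hi => if_pos hi
        have hz2 : ∀ i, z (n + i) = y i := by
          intro i
          rcases Nat.eq_zero_or_pos i with rfl | hi
          · simp [z, hy]
          · simp only [z]
            rw [if_neg (by omega), Nat.add_sub_cancel_left]
        have hset : (fun ω i => ω (n + i)) ⁻¹' cyl k y ∩ cyl n x = cyl (n + k) z := by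
          ext ω
          constructor
          · rintro ⟨h, h'⟩ i hi
            rcases le_total i n with hin | hin
            · rw [h' i hin, hz1 i hin]
            · obtain ⟨j, rfl⟩ := Nat.exists_eq_add_of_le hin
              rw [hz2]
              exact h j (by omega)
          · intro h
            refine ⟨fun j hj => ?_, fun i hi => ?_⟩
            · rw [← hz2]
              exact h (n + j) (by omega)
            · rw [← hz1 i hi]
              exact h i (by omega)
        rw [hset, hcyl', hcyl', hcyl', hz1 0 (Nat.zero_le n), if_pos hy]
        split_ifs with hx
        · rw [Finset.prod_range_add]
          congr 1
          · refine Finset.prod_congr rfl fun i hi => ?_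
            have := Finset.mem_range.1 hi
            rw [hz1 i (by omega), hz1 (i + 1) (by omega)]
          · refine Finset.prod_congr rfl fun i _ => ?_
            rw [hz2, add_assoc, hz2]
        · simp
      · rw [hcyl' (x n), if_neg hy, mul_zero]
        convert measure_empty (μ := P v)
        ext ω
        simp only [Set.mem_inter_iff, Set.mem_empty_iff_false, iff_false, not_and]
        intro h h'
        exact hy ((h 0 (Nat.zero_le k)).symm.trans (h' n le_rfl))
    · rw [Measure.map_apply hshift MeasurableSet.univ]
      simp
  have := congrArg (fun μ => μ E) key
  simpa only [Measure.map_apply hshift hE, Measure.restrict_apply (hshift hE),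
    Measure.smul_apply, smul_eq_mul] using this

/-- If a shift-invariant event has probability at least `c` from every vertex of `B`, then hitting
`B` costs: `c` times the hitting probability is at most the probability of the event. The
trajectories are split according to the path up to the first visit to `B`. -/
lemma hitting_bound [Countable V] (G : SimpleGraph V) (P : V → Measure (ℕ → V))
    (hP : IsSRWLaw G P) {A : Set (ℕ → V)} (hA : ShiftInvariant A) (B : Set V) (c : ENNReal)
    (hB : ∀ u ∈ B, c ≤ P u A) (v : V) :
    c * P v {ω | ∃ n, ω n ∈ B} ≤ P v A := by
  -- `S n` is the set of paths whose first visit to `B` is at time `n`.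
  let S : ∀ n : ℕ, Set (Fin (n + 1) → V) :=
    fun n => {y | y (Fin.last n) ∈ B ∧ ∀ i : Fin (n + 1), (i : ℕ) < n → y i ∉ B}
  let I := Σ n : ℕ, S n
  let C : I → Set (ℕ → V) := fun p => cyl p.1 (extendPath p.2.1)
  have hC : ∀ p, MeasurableSet (C p) := fun p => measurableSet_cyl _ _
  have hunion : {ω : ℕ → V | ∃ n, ω n ∈ B} = ⋃ p, C p := by
    ext ω
    simp only [Set.mem_ofPred_eq, Set.mem_iUnion]
    constructor
    · intro h
      refine ⟨⟨Nat.find h, ⟨fun i => ω i, ?_, fun i hi => Nat.find_min h hi⟩⟩, ?_⟩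
      · simpa using Nat.find_spec h
      · exact (mem_cyl_extendPath _ _).2 rfl
    · rintro ⟨⟨n, y, hy, _⟩, h⟩
      have h := (mem_cyl_extendPath _ _).1 h
      dsimp only at h
      subst h
      exact ⟨n, by simpa using hy⟩
  have hdisj : Pairwise (Function.onFun Disjoint C) := by
    intro p q hpq
    refine Set.disjoint_left.2 fun ω hp hq => hpq ?_
    obtain ⟨n, y, hy, hy'⟩ := p
    obtain ⟨k, z, hz, hz'⟩ := q
    have hp := (mem_cyl_extendPath _ _).1 hp
    have hq := (mem_cyl_extendPath _ _).1 hq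
    dsimp only at hp hq
    subst hp hq
    simp only [Fin.val_last] at hy hz
    have hnk : n = k := by
      rcases lt_trichotomy n k with h | h | h
      · exact absurd hy (hz' ⟨n, by omega⟩ h)
      · exact h
      · exact absurd hz (hy' ⟨k, by omega⟩ h)
    subst hnk
    rfl
  calc c * P v {ω | ∃ n, ω n ∈ B}
      = ∑' p, c * P v (C p) := by
        rw [hunion, measure_iUnion hdisj hC, ENNReal.tsum_mul_left]
    _ ≤ ∑' p, P v (A ∩ C p) := by
        refine ENNReal.tsum_le_tsum fun p => ?_
        have hm := markov G P hP v p.1 (extendPath p.2.1) A hA.1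
        rw [hA.preimage_add] at hm
        change _ ≤ P v (A ∩ cyl p.1 (extendPath p.2.1))
        rw [hm, mul_comm]
        refine mul_le_mul_right (hB _ ?_) _
        have := p.2.2.1
        simpa [extendPath, Fin.last, Nat.mod_eq_of_lt] using this
    _ = P v (⋃ p, A ∩ C p) := by
        rw [measure_iUnion (fun p q h => (hdisj h).mono Set.inter_subset_right
          Set.inter_subset_right) fun p => hA.1.inter (hC p)]
    _ ≤ P v A := measure_mono (Set.iUnion_subset fun p => Set.inter_subset_left)

/-- The `Z_r` half of the escape bound; the other half is the same bound for the complement. -/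
lemma escape_of_lt [Countable V] (G : SimpleGraph V) (P : V → Measure (ℕ → V))
    (hP : IsSRWLaw G P) {A : Set (ℕ → V)} (hA : ShiftInvariant A) {ε δ : ℝ} (hδ : 0 < δ)
    (v : V) (hv : (P v A).toReal < ε) :
    (P v {ω | ∃ n, δ ≤ (P (ω n) A).toReal}).toReal < ε / δ := by
  have := hP.1
  have h := hitting_bound G P hP hA {u | δ ≤ (P u A).toReal} (ENNReal.ofReal δ)
    (fun u hu => ENNReal.ofReal_le_of_le_toReal hu) v
  have h' := ENNReal.toReal_mono (measure_ne_top _ _) h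
  rw [ENNReal.toReal_mul, ENNReal.toReal_ofReal hδ.le] at h'
  rw [lt_div_iff₀ hδ, mul_comm]
  exact h'.trans_lt hv

end Markov

theorem escape_probability_bound
    {V : Type} [m : MeasurableSpace V] (hm : m = ⊤)
    (G : SimpleGraph V) (hconn : G.Connected)
    (hlf : ∀ v, (G.neighborSet v).Finite)
    (P : V → Measure (ℕ → V)) (hP : IsSRWLaw G P)
    (A : Set (ℕ → V)) (hA : ShiftInvariant A)
    (ε δ : ℝ) (hε : ε ∈ Set.Ioc (0 : ℝ) (1 / 2)) (hδ : δ ∈ Set.Ioc (0 : ℝ) (1 / 2)) :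
    -- the `A_r` version: from `v ∈ A_ε`, the walk visits `V ∖ A_δ`
    -- with probability `< ε/δ`
    (∀ v : V, 1 - ε < (P v A).toReal →
      (P v {ω | ∃ n, ¬ (1 - δ < (P (ω n) A).toReal)}).toReal < ε / δ) ∧
    -- the `Z_r` version: from `v ∈ Z_ε`, the walk visits `V ∖ Z_δ`
    -- with probability `< ε/δ`
    (∀ v : V, (P v A).toReal < ε →
      (P v {ω | ∃ n, ¬ ((P (ω n) A).toReal < δ)}).toReal < ε / δ) := by
  have : DiscreteMeasurableSpace V := ⟨fun s => by rw [hm]; trivial⟩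
  have : Countable V := countable_of_connected G hconn hlf
  have := hP.1
  refine ⟨fun v hv => ?_, fun v hv => ?_⟩
  · have hcompl : ∀ u, (P u Aᶜ).toReal = 1 - (P u A).toReal := fun u =>
      probReal_compl_eq_one_sub hA.1
    have h := escape_of_lt G P hP hA.compl (ε := ε) hδ.1 v (by rw [hcompl]; linarith)
    simp only [hcompl, le_sub_comm (a := δ)] at h
    simpa only [not_lt] using h
  · simpa only [not_lt] using escape_of_lt G P hP hA hδ.1 v hv

end Paper
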